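/- Let Γ_1 be a symmetric d×d real matrix with zero diagonal that is strictly conditionally negative definite and let Q_2 ∈ 𝒬. Define the surrogate Kullback–Leibler divergence KL(Γ_1, Q_2) = (1/2)⟨Γ_1, Q_2⟩ − (d−1)/2 − (1/2) log det(CM(Γ_1)) − (1/2) log τ(Q_2). Then KL(Γ_1, Q_2) ≥ 0, with equality if and only if Γ_1 = Γ(Q_2). -/

import Mathlib

open Matrix Finset

/-- `Θ(Q)`: `Θ(Q)_{ij} = −Q_{ij}` for `i ≠ j` and `Θ(Q)_{ii} = ∑_{j≠i} Q_{ij}`. -/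
noncomputable def thetaOf {d : ℕ} (Q : Matrix (Fin d) (Fin d) ℝ) :
    Matrix (Fin d) (Fin d) ℝ :=
  Matrix.of fun i j => if i = j then ∑ l ∈ univ.filter (fun l => l ≠ i), Q i l else -Q i j

/-- Membership in `𝒬`: symmetric, zero diagonal, and `xᵀΘ(Q)x > 0` for every nonzero
`x` with `∑ᵢ xᵢ = 0`. -/
def memQ {d : ℕ} (Q : Matrix (Fin d) (Fin d) ℝ) : Prop :=
  Q.IsSymm ∧ (∀ i, Q i i = 0) ∧
    ∀ x : Fin d → ℝ, x ≠ 0 → (∑ i, x i) = 0 → 0 < x ⬝ᵥ (thetaOf Q).mulVec x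

/-- The centering matrix `P = I − (1/d)𝟙𝟙ᵀ`. -/
noncomputable def Pmat (d : ℕ) : Matrix (Fin d) (Fin d) ℝ :=
  1 - ((d : ℝ)⁻¹) • Matrix.of (fun _ _ : Fin d => (1 : ℝ))

/-- `S` is the matrix `Σ(Q)`: the unique symmetric matrix with `Σ(Q)𝟙 = 0` and
`Θ(Q)Σ(Q) = P`. -/
def isSigmaOf {d : ℕ} (Q S : Matrix (Fin d) (Fin d) ℝ) : Prop :=
  S.IsSymm ∧ S.mulVec (fun _ => 1) = 0 ∧ thetaOf Q * S = Pmat d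

/-- The variogram associated with `Σ`: `Γ_{ij} = Σ_{ii} + Σ_{jj} − 2Σ_{ij}`. -/
noncomputable def gammaOf {d : ℕ} (S : Matrix (Fin d) (Fin d) ℝ) :
    Matrix (Fin d) (Fin d) ℝ :=
  Matrix.of fun i j => S i i + S j j - 2 * S i j

/-- The inner product `⟨A, B⟩ = ∑_{i<j} A_{ij} B_{ij}` on symmetric matrices with
zero diagonal. -/
noncomputable def sinner {d : ℕ} (A B : Matrix (Fin d) (Fin d) ℝ) : ℝ :=
  ∑ p ∈ univ.filter (fun p : Fin d × Fin d => p.1 < p.2), A p.1 p.2 * B p.1 p.2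

open Classical in
/-- The spanning tree polynomial `τ(Q) = ∑_T ∏_{{i,j}∈T} Q_{ij}`, summed over all
spanning trees of the complete graph on `{1, …, d}`. -/
noncomputable def tau {d : ℕ} (Q : Matrix (Fin d) (Fin d) ℝ) : ℝ :=
  ∑ T ∈ (univ : Finset (SimpleGraph (Fin d))).filter (fun T => T.IsTree),
    ∏ p ∈ univ.filter (fun p : Fin d × Fin d => p.1 < p.2 ∧ T.Adj p.1 p.2), Q p.1 p.2

/-- The Cayley–Menger matrix of `Γ`. -/
noncomputable def CM {d : ℕ} (Γ : Matrix (Fin d) (Fin d) ℝ) :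
    Matrix (Fin (d + 1)) (Fin (d + 1)) ℝ :=
  Matrix.of fun a b =>
    if ha : (a : ℕ) < d then
      (if hb : (b : ℕ) < d then -Γ ⟨a, ha⟩ ⟨b, hb⟩ / 2 else 1)
    else (if (b : ℕ) < d then -1 else 0)

/-- Membership in the cone `𝒞^d` of symmetric matrices with zero diagonal that are
strictly conditionally negative definite. -/
def memC {d : ℕ} (Γ : Matrix (Fin d) (Fin d) ℝ) : Prop :=
  Γ.IsSymm ∧ (∀ i, Γ i i = 0) ∧
    ∀ x : Fin d → ℝ, x ≠ 0 → (∑ i, x i) = 0 → x ⬝ᵥ Γ.mulVec x < 0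

/-! Let `L` be `Θ(Q₂)` with the row and the column of a vertex `r` deleted, and let `B` be the
matrix of the form `-Γ₁/2` in the basis `e_i - e_r` of the vectors with zero sum. If `D` has
these basis vectors as columns, then `D L Dᵀ = Θ(Q₂)` and `B = Dᵀ (-Γ₁/2) D`. Hence
`tr (L B) = ⟨Γ₁, Q₂⟩`, while `det L = τ(Q₂)` by the matrix-tree theorem and
`det B = det CM(Γ₁)` by a Schur complement. Twice the divergence is therefore
`tr (L B) - (d - 1) - log det (L B)`, the sum of `λ - 1 - log λ` over the eigenvalues `λ > 0` of
`L B`; it is nonnegative, and zero only if `L B = 1`. As `Dᵀ Σ(Q₂) D` also inverts `L`, this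
means that `B` is the form of `Σ(Q₂)`, which is that of `-Γ(Q₂)/2`.

For the matrix-tree theorem, expand `det L` multilinearly in its rows. The terms are indexed by
the maps `f` from the vertices other than `r` to all vertices; the term of `f` vanishes unless
`f` sends each vertex to its parent in a tree rooted at `r`. -/


section StarIncidence

variable {V R : Type*} [DecidableEq V] [CommRing R]

/-- The oriented incidence matrix of the star centred at `r`: its columns `e_i - e_r`, for
`i ≠ r`, form a basis of the vectors with zero sum. -/
def starIncidence (R : Type*) [CommRing R] (r : V) : Matrix V {v // v ≠ r} R :=
  of fun v i => (if v = i then 1 else 0) - if v = r then 1 else 0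

lemma starIncidence_submatrix_val (r : V) :
    (starIncidence R r).submatrix (Subtype.val : {v // v ≠ r} → V) id = 1 := by
  ext i j
  simp [starIncidence, one_apply, i.2, Subtype.ext_iff]

variable [Fintype V]

lemma vecMul_starIncidence_apply (r : V) (x : V → R) (i : {v // v ≠ r}) :
    (x ᵥ* starIncidence R r) i = x i - x r := by
  simp [vecMul, dotProduct, starIncidence, mul_sub, sum_sub_distrib]

lemma one_vecMul_starIncidence (r : V) : 1 ᵥ* starIncidence R r = 0 := by
  ext i
  simp [vecMul_starIncidence_apply]

lemma starIncidence_mul_cancel {W : Type*} {r : V} {X Y : Matrix {v // v ≠ r} W R}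
    (h : starIncidence R r * X = starIncidence R r * Y) : X = Y := by
  have left_inverse (Z : Matrix {v // v ≠ r} W R) :
      (starIncidence R r * Z).submatrix (Subtype.val : {v // v ≠ r} → V) id = Z := by
    rw [submatrix_mul _ _ _ id id Function.bijective_id, starIncidence_submatrix_val,
      submatrix_id_id, Matrix.one_mul]
  rw [← left_inverse X, h, left_inverse]

lemma starIncidence_mulVec_ne_zero {r : V} {x : {v // v ≠ r} → R} (hx : x ≠ 0) :
    starIncidence R r *ᵥ x ≠ 0 := by
  intro h
  refine hx ?_
  rw [← one_mulVec x, ← starIncidence_submatrix_val r]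
  exact funext fun i => congrFun h i

lemma sum_starIncidence_mulVec (r : V) (x : {v // v ≠ r} → R) :
    ∑ v, (starIncidence R r *ᵥ x) v = 0 := by
  rw [← one_dotProduct, dotProduct_mulVec, one_vecMul_starIncidence, zero_dotProduct]

lemma exists_sum_eq_zero_vecMul_starIncidence {K : Type*} [Field K] [CharZero K] (r : V)
    (y : {v // v ≠ r} → K) : ∃ x : V → K, ∑ v, x v = 0 ∧ x ᵥ* starIncidence K r = y := by
  let z : V → K := fun v => if h : v ≠ r then y ⟨v, h⟩ else 0
  let mean : K := (∑ v, z v) / Fintype.card V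
  have card_ne_zero : (Fintype.card V : K) ≠ 0 :=
    Nat.cast_ne_zero.mpr (Fintype.card_pos_iff.mpr ⟨r⟩).ne'
  refine ⟨fun v => z v - mean, ?_, ?_⟩
  · simp [mean, sum_sub_distrib, mul_div_cancel₀ _ card_ne_zero]
  · ext i
    simp [vecMul_starIncidence_apply, z, i.2]

lemma starIncidence_mul_submatrix {W : Type*} (r : V) {A : Matrix V W R} (hA : 1 ᵥ* A = 0) :
    starIncidence R r * A.submatrix (Subtype.val : {v // v ≠ r} → V) id = A := by
  ext v w
  have col_sum : A r w + ∑ i : {v // v ≠ r}, A i w = 0 := by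
    rw [← Fintype.sum_eq_add_sum_subtype_ne (fun v => A v w)]
    simpa [vecMul, dotProduct] using congrFun hA w
  simp only [Matrix.mul_apply, starIncidence, of_apply, submatrix_apply, id_eq, sub_mul, ite_mul,
    one_mul, zero_mul, sum_sub_distrib]
  by_cases hv : v = r
  · subst hv
    simp only [if_true, fun i : {u // u ≠ v} => i.2.symm, if_false, sum_const_zero]
    linear_combination -col_sum
  · rw [Fintype.sum_eq_single (⟨v, hv⟩ : {v // v ≠ r}) fun i hi =>
      if_neg fun h => hi (Subtype.ext h.symm)]
    simp [hv]

/-- `A` with the row and the column of `r` deleted; for the Laplacian of a graph this is the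
grounded Laplacian. -/
def grounded (A : Matrix V V R) (r : V) : Matrix {v // v ≠ r} {v // v ≠ r} R :=
  A.submatrix Subtype.val Subtype.val

lemma starIncidence_mul_grounded_mul_transpose (r : V) {A : Matrix V V R}
    (hrow : A *ᵥ 1 = 0) (hcol : 1 ᵥ* A = 0) :
    starIncidence R r * grounded A r * (starIncidence R r)ᵀ = A := by
  have hrow' : (1 : V → R) ᵥ* Aᵀ = 0 := by rw [vecMul_transpose, hrow]
  have cols : A.submatrix id (Subtype.val : {v // v ≠ r} → V) * (starIncidence R r)ᵀ = A := by
    simpa using congrArg transpose (starIncidence_mul_submatrix r hrow')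
  have rows : grounded A r * (starIncidence R r)ᵀ = A.submatrix Subtype.val id :=
    congrArg (fun B => B.submatrix (Subtype.val : {v // v ≠ r} → V) id) cols
  rw [Matrix.mul_assoc, rows, starIncidence_mul_submatrix r hcol]

/-- The bilinear form of `A` on vectors with zero sum, in the basis `e_i - e_r`. For
`A = -Γ/2` it is the Farris transform `(Γ_ir + Γ_rj - Γ_ij)/2` of a variogram `Γ`. -/
def sumZeroForm (A : Matrix V V R) (r : V) : Matrix {v // v ≠ r} {v // v ≠ r} R :=
  (starIncidence R r)ᵀ * A * starIncidence R r

lemma sumZeroForm_apply (A : Matrix V V R) (r : V) (i j : {v // v ≠ r}) :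
    sumZeroForm A r i j = A i j - A r j - A i r + A r r := by
  have hrow (v : V) : ((starIncidence R r)ᵀ * A) i v = A i v - A r v := by
    rw [← vecMul_starIncidence_apply r (fun u => A u v)]
    simp [Matrix.mul_apply, vecMul, dotProduct, mul_comm]
  have hcol := vecMul_starIncidence_apply r (((starIncidence R r)ᵀ * A) i) j
  rw [hrow, hrow] at hcol
  rw [sumZeroForm, Matrix.mul_apply_eq_vecMul, hcol]
  ring

lemma trace_grounded_mul_sumZeroForm (r : V) {L : Matrix V V R} (hrow : L *ᵥ 1 = 0)
    (hcol : 1 ᵥ* L = 0) (A : Matrix V V R) :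
    (grounded L r * sumZeroForm A r).trace = (L * A).trace := by
  conv_rhs => rw [← starIncidence_mul_grounded_mul_transpose r hrow hcol]
  rw [Matrix.mul_assoc, Matrix.mul_assoc, trace_mul_comm (starIncidence R r), sumZeroForm]
  simp only [Matrix.mul_assoc]

lemma grounded_mul_sumZeroForm_eq_one {r : V} {L S : Matrix V V R} (hrow : L *ᵥ 1 = 0)
    (hcol : 1 ᵥ* L = 0) (hS : L * S * starIncidence R r = starIncidence R r) :
    grounded L r * sumZeroForm S r = 1 := by
  refine starIncidence_mul_cancel ?_
  calc starIncidence R r * (grounded L r * sumZeroForm S r)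
      = starIncidence R r * grounded L r * (starIncidence R r)ᵀ * S * starIncidence R r := by
        simp only [sumZeroForm, Matrix.mul_assoc]
    _ = starIncidence R r * (1 : Matrix {v // v ≠ r} {v // v ≠ r} R) := by
        rw [starIncidence_mul_grounded_mul_transpose r hrow hcol, hS, Matrix.mul_one]

lemma eq_of_sumZeroForm_eq [NoZeroDivisors R] [NeZero (2 : R)] {r : V} {A B : Matrix V V R}
    (hA : A.IsSymm) (hB : B.IsSymm) (hA0 : ∀ i, A i i = 0) (hB0 : ∀ i, B i i = 0)
    (h : sumZeroForm A r = sumZeroForm B r) : A = B := by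
  have entries (i j : {v // v ≠ r}) := congrFun₂ h i j
  simp only [sumZeroForm_apply, hA0, hB0] at entries
  have root_row (i : V) : A r i = B r i := by
    by_cases hi : i = r
    · rw [hi, hA0, hB0]
    · have := entries ⟨i, hi⟩ ⟨i, hi⟩
      simp only [hA0, hB0, hA.apply r i, hB.apply r i] at this
      refine mul_left_cancel₀ (two_ne_zero (α := R)) ?_
      linear_combination -this
  ext i j
  by_cases hi : i = r
  · rw [hi, root_row]
  by_cases hj : j = r
  · rw [hj, ← hA.apply, ← hB.apply, root_row]
  have hij := entries ⟨i, hi⟩ ⟨j, hj⟩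
  simp only [← hA.apply i r, ← hB.apply i r, root_row] at hij
  linear_combination hij

end StarIncidence

section MatrixTree

variable {V : Type*} {r : V}

/-- One step towards the root `r` along the map `f`; the root itself stays put. -/
def parentStep [DecidableEq V] (f : {v // v ≠ r} → V) (v : V) : V :=
  if h : v = r then r else f ⟨v, h⟩

lemma parentStep_coe [DecidableEq V] (f : {v // v ≠ r} → V) (i : {v // v ≠ r}) :
    parentStep f i = f i :=
  dif_neg i.2

/-- The vertices from which `r` is reached by passing to parents repeatedly. -/
def ReachesRoot [DecidableEq V] (f : {v // v ≠ r} → V) (v : V) : Prop :=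
  ∃ k, (parentStep f)^[k] v = r

lemma reachesRoot_root [DecidableEq V] (f : {v // v ≠ r} → V) : ReachesRoot f r :=
  ⟨0, rfl⟩

lemma reachesRoot_parent_iff [DecidableEq V] {f : {v // v ≠ r} → V} {i : {v // v ≠ r}} :
    ReachesRoot f (f i) ↔ ReachesRoot f i := by
  constructor
  · rintro ⟨k, hk⟩
    exact ⟨k + 1, by rwa [Function.iterate_succ_apply, parentStep_coe]⟩
  · rintro ⟨_ | k, hk⟩
    · exact absurd hk i.2
    · exact ⟨k, by rwa [Function.iterate_succ_apply, parentStep_coe] at hk⟩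

/-- A map sending each non-root vertex of some tree rooted at `r` to its parent. -/
def IsParentMap [DecidableEq V] (f : {v // v ≠ r} → V) : Prop :=
  ∀ v, ReachesRoot f v

/-- The graph with an edge from each non-root vertex to its parent. -/
def parentGraph (f : {v // v ≠ r} → V) : SimpleGraph V :=
  SimpleGraph.fromEdgeSet (Set.range fun i : {v // v ≠ r} => s(↑i, f i))

lemma parentGraph_adj_iff {f : {v // v ≠ r} → V} {v w : V} :
    (parentGraph f).Adj v w ↔ ((∃ i : {v // v ≠ r}, s(↑i, f i) = s(v, w)) ∧ v ≠ w) :=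
  SimpleGraph.fromEdgeSet_adj _

lemma isParentMap_iff_exists_height [DecidableEq V] {f : {v // v ≠ r} → V} :
    IsParentMap f ↔ ∃ height : V → ℕ, ∀ i, height (f i) < height i := by
  constructor
  · intro hf
    classical
    refine ⟨fun v => Nat.find (hf v), fun i => ?_⟩
    have reach := Nat.find_spec (hf i)
    obtain ⟨k, hk⟩ := Nat.exists_eq_succ_of_ne_zero
      fun h0 : Nat.find (hf i) = 0 => i.2 (by simpa [h0] using reach)
    rw [hk, Function.iterate_succ_apply, parentStep_coe] at reach
    change Nat.find (hf (f i)) < Nat.find (hf i)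
    exact hk ▸ Nat.lt_succ_of_le (Nat.find_min' _ reach)
  · rintro ⟨height, hlt⟩ v
    induction hm : height v using Nat.strong_induction_on generalizing v with
    | _ m ih =>
      by_cases hv : v = r
      · exact hv ▸ reachesRoot_root f
      · exact (reachesRoot_parent_iff (i := ⟨v, hv⟩)).mp (ih _ (hm ▸ hlt ⟨v, hv⟩) _ rfl)

namespace IsParentMap

variable [DecidableEq V] {f : {v // v ≠ r} → V}

lemma ne (hf : IsParentMap f) (i : {v // v ≠ r}) : (i : V) ≠ f i := by
  obtain ⟨height, hlt⟩ := isParentMap_iff_exists_height.mp hf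
  exact fun h => (hlt i).ne (congrArg height h.symm)

lemma parentGraph_adj (hf : IsParentMap f) (i : {v // v ≠ r}) : (parentGraph f).Adj i (f i) :=
  parentGraph_adj_iff.mpr ⟨⟨i, rfl⟩, hf.ne i⟩

lemma parentGraph_connected (hf : IsParentMap f) : (parentGraph f).Connected := by
  obtain ⟨height, hlt⟩ := isParentMap_iff_exists_height.mp hf
  have reachable_root (v : V) : (parentGraph f).Reachable v r := by
    induction hm : height v using Nat.strong_induction_on generalizing v with
    | _ m ih =>
      by_cases hv : v = r
      · rw [hv]
      · exact (hf.parentGraph_adj ⟨v, hv⟩).reachable.trans (ih _ (hm ▸ hlt ⟨v, hv⟩) _ rfl)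
  have : Nonempty V := ⟨r⟩
  exact ⟨fun u v => (reachable_root u).trans (reachable_root v).symm⟩

lemma injective_edge (hf : IsParentMap f) :
    Function.Injective fun i : {v // v ≠ r} => s(↑i, f i) := by
  obtain ⟨height, hlt⟩ := isParentMap_iff_exists_height.mp hf
  intro i j hij
  rcases Sym2.eq_iff.mp hij with ⟨h, -⟩ | ⟨hi, hj⟩
  · exact Subtype.ext h
  · have height_lt : height i < height j := (congrArg height hi).trans_lt (hlt j)
    exact absurd ((congrArg height hj.symm).trans_lt (hlt i)) height_lt.asymm

lemma edgeSet_parentGraph (hf : IsParentMap f) :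
    (parentGraph f).edgeSet = Set.range fun i : {v // v ≠ r} => s(↑i, f i) := by
  rw [parentGraph, SimpleGraph.edgeSet_fromEdgeSet, sdiff_eq_left, Set.disjoint_left]
  rintro _ ⟨i, rfl⟩
  simpa using hf.ne i

lemma parentGraph_isTree [Finite V] (hf : IsParentMap f) : (parentGraph f).IsTree := by
  rw [SimpleGraph.isTree_iff_connected_and_card]
  refine ⟨hf.parentGraph_connected, ?_⟩
  rw [hf.edgeSet_parentGraph, Nat.card_range_of_injective hf.injective_edge]
  have vertices : Nat.card {v // v ≠ r} = Nat.card V - 1 := by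
    cases nonempty_fintype V
    simp [Nat.card_eq_fintype_card]
  rw [vertices, Nat.sub_add_cancel (Nat.card_pos_iff.mpr ⟨⟨r⟩, inferInstance⟩)]

lemma injOn_parentGraph :
    Set.InjOn parentGraph {f : {v // v ≠ r} → V | IsParentMap f} := by
  intro f hf g _ hfg
  obtain ⟨height_f, hlt_f⟩ := isParentMap_iff_exists_height.mp hf
  ext i
  induction hm : height_f i using Nat.strong_induction_on generalizing i with
  | _ m ih =>
    obtain ⟨⟨j, hj⟩, -⟩ := parentGraph_adj_iff.mp (hfg ▸ IsParentMap.parentGraph_adj hf i)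
    rcases Sym2.eq_iff.mp hj with ⟨hji, h⟩ | ⟨hj, hgj⟩
    · rw [← h, Subtype.ext hji]
    · -- Otherwise `g` reverses the edge from `i` to `f i`; by induction so does `f`.
      exfalso
      have hji : height_f j < height_f i := hj ▸ hlt_f i
      have := hlt_f j
      rw [ih _ (hm ▸ hji) j rfl, hgj] at this
      omega

lemma surjOn_parentGraph [Finite V] :
    Set.SurjOn parentGraph {f : {v // v ≠ r} → V | IsParentMap f} {T | T.IsTree} := by
  intro T (hT : T.IsTree)
  have exists_closer (i : {v // v ≠ r}) : ∃ w, T.Adj i w ∧ T.dist w r < T.dist i r := by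
    obtain ⟨p, hp⟩ := hT.connected.exists_walk_length_eq_dist i r
    obtain ⟨w, hadj, q, rfl⟩ := p.exists_eq_cons_of_ne i.2
    exact ⟨w, hadj, hp ▸ Nat.lt_succ_of_le (SimpleGraph.dist_le q)⟩
  choose f hadj hdist using exists_closer
  have hf : IsParentMap f := isParentMap_iff_exists_height.mpr ⟨fun v => T.dist v r, hdist⟩
  refine ⟨f, hf, SimpleGraph.edgeSet_injective (Set.eq_of_subset_of_ncard_le ?_ ?_)⟩
  · rw [hf.edgeSet_parentGraph]
    rintro _ ⟨i, rfl⟩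
    exact hadj i
  · have := (SimpleGraph.isTree_iff_connected_and_card.mp hf.parentGraph_isTree).2
    have := (SimpleGraph.isTree_iff_connected_and_card.mp hT).2
    rw [← Nat.card_coe_set_eq, ← Nat.card_coe_set_eq]
    omega

end IsParentMap
end MatrixTree

section WeightedMatrixTree

variable {V R : Type*} [Fintype V] [DecidableEq V] [CommRing R] {r : V}

/-- The Laplacian of a weighted digraph. The diagonal of `Q` cancels, so loops do not
contribute. -/
def weightedLaplacian (Q : Matrix V V R) : Matrix V V R :=
  diagonal (fun v => ∑ w, Q v w) - Q

lemma weightedLaplacian_mulVec_one (Q : Matrix V V R) : weightedLaplacian Q *ᵥ 1 = 0 := by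
  ext v
  simp [weightedLaplacian, mulVec, dotProduct, diagonal_apply]

lemma weightedLaplacian_isSymm {Q : Matrix V V R} (hQ : Q.IsSymm) :
    (weightedLaplacian Q).IsSymm := by
  rw [weightedLaplacian, IsSymm, transpose_sub, diagonal_transpose, hQ]

lemma one_vecMul_weightedLaplacian {Q : Matrix V V R} (hQ : Q.IsSymm) :
    1 ᵥ* weightedLaplacian Q = 0 := by
  rw [← mulVec_transpose, weightedLaplacian_isSymm hQ, weightedLaplacian_mulVec_one]

lemma trace_weightedLaplacian_mul (Q : Matrix V V R) {A : Matrix V V R} (hA : ∀ v, A v v = 0) :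
    (weightedLaplacian Q * A).trace = -∑ v, ∑ w, Q v w * A w v := by
  simp [weightedLaplacian, Matrix.sub_mul, Matrix.trace, Matrix.mul_apply, diagonal_apply, hA]

/-- The matrix with rows `e_i - e_{f i}`, where `e_r = 0`. -/
def parentMatrix (R : Type*) [CommRing R] (f : {v // v ≠ r} → V) :
    Matrix {v // v ≠ r} {v // v ≠ r} R :=
  of fun i k => (if i = k then 1 else 0) - if f i = k then 1 else 0

lemma parentMatrix_mulVec {f : {v // v ≠ r} → V} {x : V → R} (hx : x r = 0)
    (i : {v // v ≠ r}) : (parentMatrix R f *ᵥ fun k => x k) i = x i - x (f i) := by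
  have parent_term : (∑ k : {v // v ≠ r}, if f i = k then x k else 0) = x (f i) := by
    by_cases h : f i = r
    · rw [h, hx]
      exact sum_eq_zero fun k _ => if_neg k.2.symm
    · rw [Fintype.sum_eq_single ⟨f i, h⟩ fun k hk => if_neg fun e => hk (Subtype.ext e.symm)]
      exact if_pos rfl
  simp [mulVec, dotProduct, parentMatrix, sub_mul, sum_sub_distrib, parent_term]

lemma IsParentMap.det_parentMatrix {f : {v // v ≠ r} → V} (hf : IsParentMap f) :
    (parentMatrix R f).det = 1 := by
  obtain ⟨height, hlt⟩ := isParentMap_iff_exists_height.mp hf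
  have entry_of_height_le {i j : {v // v ≠ r}} (h : height i ≤ height j) :
      parentMatrix R f i j = if i = j then 1 else 0 := by
    have : f i ≠ j := fun e => (hlt i).not_ge (e ▸ h)
    simp [parentMatrix, this]
  have block_triangular :
      BlockTriangular (parentMatrix R f) fun i => OrderDual.toDual (height i) := by
    intro i j (hij : height i < height j)
    rw [entry_of_height_le hij.le, if_neg fun e => hij.ne (by rw [e])]
  rw [block_triangular.det]
  refine prod_eq_one fun m _ => ?_
  have block_eq_one :
      (parentMatrix R f).toSquareBlock (fun i => OrderDual.toDual (height i)) m = 1 := by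
    ext i j
    have same_height : height i.1 = height j.1 := i.2.trans j.2.symm
    simp [toSquareBlock_def, entry_of_height_le same_height.le, one_apply, Subtype.ext_iff]
  rw [block_eq_one, det_one]

lemma det_parentMatrix_of_not_isParentMap {f : {v // v ≠ r} → V} (hf : ¬ IsParentMap f) :
    (parentMatrix R f).det = 0 := by
  classical
  obtain ⟨v, hv⟩ := not_forall.mp hf
  have hvr : v ≠ r := fun h => hv (h ▸ reachesRoot_root f)
  let x : V → R := fun v => if ReachesRoot f v then 0 else 1
  have kernel : (parentMatrix R f *ᵥ fun k => x k) = 0 := by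
    ext i
    rw [parentMatrix_mulVec (x := x) (if_pos (reachesRoot_root f))]
    simp [x, reachesRoot_parent_iff]
  have adjugate_kernel := congrFun (congrArg ((parentMatrix R f).adjugate *ᵥ ·) kernel) ⟨v, hvr⟩
  simpa [mulVec_mulVec, adjugate_mul, smul_mulVec, x, hv] using adjugate_kernel

open Classical in
theorem det_grounded_weightedLaplacian (Q : Matrix V V R) (r : V) :
    (grounded (weightedLaplacian Q) r).det =
      ∑ f : {v // v ≠ r} → V with IsParentMap f, ∏ i : {v // v ≠ r}, Q i (f i) := by
  have rows : grounded (weightedLaplacian Q) r = fun i : {v // v ≠ r} => ∑ w : V, Q i w •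
      fun k : {v // v ≠ r} => (if i = k then (1 : R) else 0) - if w = k then 1 else 0 := by
    ext i k
    simp [grounded, weightedLaplacian, diagonal_apply, mul_sub, Finset.sum_apply,
      sum_sub_distrib, Subtype.ext_iff]
  have expand : (grounded (weightedLaplacian Q) r).det =
      ∑ f : {v // v ≠ r} → V, (∏ i : {v // v ≠ r}, Q i (f i)) * (parentMatrix R f).det := by
    rw [rows]
    refine (detRowAlternating.toMultilinearMap.map_sum _).trans (sum_congr rfl fun f _ => ?_)
    exact detRowAlternating.toMultilinearMap.map_smul_univ
      (fun i : {v // v ≠ r} => Q i (f i)) (parentMatrix R f)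
  rw [expand, sum_filter]
  refine sum_congr rfl fun f _ => ?_
  split_ifs with hf
  · rw [hf.det_parentMatrix, mul_one]
  · rw [det_parentMatrix_of_not_isParentMap hf, mul_zero]

open Classical in
theorem det_grounded_weightedLaplacian_eq_sum_isTree (q : Sym2 V → R) (r : V) :
    (grounded (weightedLaplacian (of fun v w => q s(v, w))) r).det =
      ∑ T : SimpleGraph V with T.IsTree, ∏ e ∈ T.edgeFinset, q e := by
  rw [det_grounded_weightedLaplacian]
  refine sum_nbij parentGraph (by simpa using fun f => IsParentMap.parentGraph_isTree)
    (by simpa using IsParentMap.injOn_parentGraph) (by simpa using IsParentMap.surjOn_parentGraph)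
    fun f hf => ?_
  have hf : IsParentMap f := by simpa using hf
  have edges : (parentGraph f).edgeFinset = univ.image fun i : {v // v ≠ r} => s(↑i, f i) := by
    rw [← coe_inj, SimpleGraph.coe_edgeFinset, hf.edgeSet_parentGraph]
    simp
  rw [edges, prod_image hf.injective_edge.injOn]
  simp only [of_apply]

end WeightedMatrixTree

section OrderedPairs

variable {V : Type*} [LinearOrder V] [Fintype V]

lemma sum_sum_eq_two_mul_sum_lt {R : Type*} [CommSemiring R] {f : V → V → R}
    (hsymm : ∀ i j, f i j = f j i) (hdiag : ∀ i, f i i = 0) :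
    ∑ i, ∑ j, f i j = 2 * ∑ p : V × V with p.1 < p.2, f p.1 p.2 := by
  have split (p : V × V) :
      f p.1 p.2 = (if p.1 < p.2 then f p.1 p.2 else 0) + if p.2 < p.1 then f p.2 p.1 else 0 := by
    rcases lt_trichotomy p.1 p.2 with h | h | h
    · rw [if_pos h, if_neg h.asymm, add_zero]
    · rw [h, hdiag, ite_self, add_zero]
    · rw [if_neg h.asymm, if_pos h, zero_add, hsymm]
  have swap : ∑ p : V × V, (if p.2 < p.1 then f p.2 p.1 else 0) =
      ∑ p : V × V, if p.1 < p.2 then f p.1 p.2 else 0 :=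
    (Equiv.prodComm V V).sum_comp fun p => if p.1 < p.2 then f p.1 p.2 else 0
  rw [← Fintype.sum_prod_type', Fintype.sum_congr _ _ split, sum_add_distrib, swap, sum_filter,
    two_mul]

open Classical in
lemma prod_lt_and_adj_eq_prod_edgeFinset {M : Type*} [CommMonoid M] (T : SimpleGraph V)
    (q : Sym2 V → M) :
    ∏ p : V × V with p.1 < p.2 ∧ T.Adj p.1 p.2, q s(p.1, p.2) = ∏ e ∈ T.edgeFinset, q e := by
  refine prod_nbij (fun p => s(p.1, p.2)) (fun p hp => ?_) ?_ ?_ fun _ _ => rfl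
  · simpa using (mem_filter.mp hp).2.2
  · rintro ⟨a, b⟩ hab ⟨c, d⟩ hcd h
    rcases Sym2.eq_iff.mp h with ⟨rfl, rfl⟩ | ⟨rfl, rfl⟩
    · rfl
    · exact absurd (mem_filter.mp hab).2.1 (mem_filter.mp hcd).2.1.asymm
  · intro e he
    induction e with
    | _ a b =>
      have hadj : T.Adj a b := by simpa using he
      rcases hadj.ne.lt_or_gt with h | h
      · exact ⟨(a, b), by simp [h, hadj], rfl⟩
      · exact ⟨(b, a), by simp [h, hadj.symm], Sym2.eq_swap⟩

end OrderedPairs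

lemma thetaOf_eq_weightedLaplacian {d : ℕ} (Q : Matrix (Fin d) (Fin d) ℝ) :
    thetaOf Q = weightedLaplacian Q := by
  ext i j
  rcases eq_or_ne i j with rfl | h
  · simp [thetaOf, weightedLaplacian, ← sum_erase_eq_sub, filter_ne']
  · simp [thetaOf, weightedLaplacian, h]

lemma tau_eq_det_grounded_weightedLaplacian {d : ℕ} {Q : Matrix (Fin d) (Fin d) ℝ}
    (hQ : Q.IsSymm) (r : Fin d) : tau Q = (grounded (weightedLaplacian Q) r).det := by
  classical
  let q : Sym2 (Fin d) → ℝ := Sym2.lift ⟨Q, fun i j => hQ.apply j i⟩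
  calc tau Q = ∑ T : SimpleGraph (Fin d) with T.IsTree, ∏ e ∈ T.edgeFinset, q e :=
        sum_congr (by congr) fun T _ => by
          rw [← prod_lt_and_adj_eq_prod_edgeFinset]
          rfl
    _ = (grounded (weightedLaplacian (of fun i j => q s(i, j))) r).det :=
        (det_grounded_weightedLaplacian_eq_sum_isTree q r).symm
    _ = (grounded (weightedLaplacian Q) r).det := rfl

section SteinLoss

variable {n : Type*} [Fintype n] [DecidableEq n]

/-- Stein's loss: twice the Kullback–Leibler divergence of centred Gaussians for which `M` is
the product of one covariance with the other precision matrix. -/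
noncomputable def steinLoss (M : Matrix n n ℝ) : ℝ :=
  M.trace - Fintype.card n - Real.log M.det

lemma steinLoss_one : steinLoss (1 : Matrix n n ℝ) = 0 := by
  simp [steinLoss]

lemma steinLoss_mul_comm (A B : Matrix n n ℝ) : steinLoss (A * B) = steinLoss (B * A) := by
  rw [steinLoss, trace_mul_comm, det_mul_comm, steinLoss]

lemma steinLoss_eq_sum_eigenvalues {M : Matrix n n ℝ} (hM : M.PosDef) :
    steinLoss M =
      ∑ i, (hM.1.eigenvalues i - 1 - Real.log (hM.1.eigenvalues i)) := by
  rw [steinLoss, hM.1.trace_eq_sum_eigenvalues, hM.1.det_eq_prod_eigenvalues]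
  simp only [RCLike.ofReal_real_eq_id, id]
  rw [Real.log_prod fun i _ => (hM.eigenvalues_pos i).ne', sum_sub_distrib, sum_sub_distrib]
  simp

lemma sub_one_sub_log_nonneg {x : ℝ} (hx : 0 < x) : 0 ≤ x - 1 - Real.log x :=
  sub_nonneg.mpr (Real.log_le_sub_one_of_pos hx)

lemma steinLoss_nonneg {M : Matrix n n ℝ} (hM : M.PosDef) : 0 ≤ steinLoss M := by
  rw [steinLoss_eq_sum_eigenvalues hM]
  exact sum_nonneg fun i _ => sub_one_sub_log_nonneg (hM.eigenvalues_pos i)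

lemma steinLoss_eq_zero_iff {M : Matrix n n ℝ} (hM : M.PosDef) : steinLoss M = 0 ↔ M = 1 := by
  refine ⟨fun h => ?_, fun h => h ▸ steinLoss_one⟩
  rw [steinLoss_eq_sum_eigenvalues hM,
    sum_eq_zero_iff_of_nonneg fun i _ => sub_one_sub_log_nonneg (hM.eigenvalues_pos i)] at h
  have eigenvalues_eq_one (i : n) : hM.1.eigenvalues i = 1 := by
    by_contra hne
    linarith [Real.log_lt_sub_one_of_pos (hM.eigenvalues_pos i) hne, h i (mem_univ i)]
  rw [hM.1.spectral_theorem, funext eigenvalues_eq_one]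
  have : (diagonal (RCLike.ofReal ∘ fun _ => (1 : ℝ)) : Matrix n n ℝ) = 1 := by
    simp
  rw [this, map_one]

open scoped MatrixOrder in
lemma exists_posDef_steinLoss_mul_eq {A B : Matrix n n ℝ} (hA : A.PosDef) (hB : B.PosDef) :
    ∃ M : Matrix n n ℝ, M.PosDef ∧ steinLoss (A * B) = steinLoss M ∧ (M = 1 → A * B = 1) := by
  obtain ⟨Y, hY, rfl⟩ := CStarAlgebra.isStrictlyPositive_iff_eq_star_mul_self.mp
    hA.isStrictlyPositive
  rw [star_eq_conjTranspose]
  refine ⟨Y * B * Yᴴ, hB.mul_mul_conjTranspose_same (vecMul_injective_iff_isUnit.mpr hY), ?_, ?_⟩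
  · rw [Matrix.mul_assoc, steinLoss_mul_comm]
  · intro h
    rw [Matrix.mul_assoc]
    exact mul_eq_one_comm.mp h

lemma steinLoss_mul_nonneg {A B : Matrix n n ℝ} (hA : A.PosDef) (hB : B.PosDef) :
    0 ≤ steinLoss (A * B) := by
  obtain ⟨M, hM, h, -⟩ := exists_posDef_steinLoss_mul_eq hA hB
  exact h ▸ steinLoss_nonneg hM

lemma steinLoss_mul_eq_zero_iff {A B : Matrix n n ℝ} (hA : A.PosDef) (hB : B.PosDef) :
    steinLoss (A * B) = 0 ↔ A * B = 1 := by
  obtain ⟨M, hM, h, h_one⟩ := exists_posDef_steinLoss_mul_eq hA hB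
  exact ⟨fun h0 => h_one ((steinLoss_eq_zero_iff hM).mp (h ▸ h0)), fun h1 => h1 ▸ steinLoss_one⟩

end SteinLoss

section BorderedDet

variable {V R : Type*} [DecidableEq V] [CommRing R]

/-- `A` bordered by a last column of ones and a last row of minus ones, as in the Cayley–Menger
matrix. -/
def bordered (A : Matrix V V R) : Matrix (V ⊕ Unit) (V ⊕ Unit) R :=
  fromBlocks A (of fun _ _ => 1) (of fun _ _ => -1) 0

/-- The block of `bordered A` on the root and the added index. -/
def rootBlock (a : R) : Matrix (Unit ⊕ Unit) (Unit ⊕ Unit) R :=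
  fromBlocks (of fun _ _ => a) 1 (-1) 0

lemma det_rootBlock (a : R) : (rootBlock a).det = 1 := by
  rw [← det_submatrix_equiv_self (finTwoEquiv.trans Equiv.boolEquivPUnitSumPUnit), det_fin_two]
  simp [rootBlock, finTwoEquiv, Equiv.boolEquivPUnitSumPUnit]

lemma rootBlock_inv (a : R) : (rootBlock a)⁻¹ = fromBlocks 0 (-1) 1 (of fun _ _ => a) :=
  inv_eq_right_inv (by simp [rootBlock, fromBlocks_multiply])

variable [Fintype V]

lemma det_bordered_eq_det_sumZeroForm (A : Matrix V V R) (r : V) :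
    (bordered A).det = (sumZeroForm A r).det := by
  let splitRoot : {v // v ≠ r} ⊕ (Unit ⊕ Unit) ≃ V ⊕ Unit :=
    (Equiv.sumAssoc _ _ _).symm.trans (Equiv.sumCongr
      ((Equiv.optionEquivSumPUnit _).symm.trans (Equiv.optionSubtypeNe r)) (Equiv.refl Unit))
  have blocks : (bordered A).submatrix splitRoot splitRoot = fromBlocks (grounded A r)
      (fromCols (of fun i _ => A i r) (of fun _ _ => 1))
      (fromRows (of fun _ j => A r j) (of fun _ _ => -1)) (rootBlock (A r r)) := by
    ext (i | i | i) (j | j | j) <;> simp [splitRoot, bordered, rootBlock, grounded]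
  let _ : Invertible (rootBlock (A r r)) := invertibleOfIsUnitDet _ (by simp [det_rootBlock])
  rw [← det_submatrix_equiv_self splitRoot, blocks, det_fromBlocks₂₂, det_rootBlock, one_mul,
    invOf_eq_nonsing_inv, rootBlock_inv]
  congr 1
  ext i j
  simp only [sumZeroForm_apply, grounded, Matrix.sub_apply, submatrix_apply, Matrix.mul_apply,
    Fintype.sum_sum_type, univ_unique, sum_singleton, of_apply, fromCols_apply_inl,
    fromCols_apply_inr, fromRows_apply_inl, fromRows_apply_inr, fromBlocks_apply₁₁,
    fromBlocks_apply₁₂, fromBlocks_apply₂₁, fromBlocks_apply₂₂, Matrix.zero_apply,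
    Matrix.neg_apply, one_apply_eq]
  ring

end BorderedDet

lemma det_CM {d : ℕ} (Γ : Matrix (Fin d) (Fin d) ℝ) (r : Fin d) :
    (CM Γ).det = (sumZeroForm ((-1 / 2 : ℝ) • Γ) r).det := by
  let border : Fin d ⊕ Unit ≃ Fin (d + 1) :=
    (Equiv.optionEquivSumPUnit _).symm.trans finSuccEquivLast.symm
  have blocks : (CM Γ).submatrix border border = bordered ((-1 / 2 : ℝ) • Γ) := by
    ext (i | i) (j | j) <;> simp [border, CM, bordered, div_eq_inv_mul]
  rw [← det_submatrix_equiv_self border, blocks, det_bordered_eq_det_sumZeroForm _ r]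

section Definite

variable {V : Type*} [Fintype V] {A : Matrix V V ℝ}

lemma posDef_sumZeroForm [DecidableEq V] (hA : A.IsSymm)
    (hpos : ∀ x : V → ℝ, x ≠ 0 → ∑ v, x v = 0 → 0 < x ⬝ᵥ A *ᵥ x) (r : V) :
    (sumZeroForm A r).PosDef := by
  refine PosDef.of_dotProduct_mulVec_pos ?_ fun x hx => ?_
  · rw [IsHermitian, conjTranspose_eq_transpose_of_trivial, sumZeroForm, transpose_mul,
      transpose_mul, hA, transpose_transpose, Matrix.mul_assoc]
  · have form : star x ⬝ᵥ sumZeroForm A r *ᵥ x =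
        (starIncidence ℝ r *ᵥ x) ⬝ᵥ A *ᵥ (starIncidence ℝ r *ᵥ x) := by
      rw [star_trivial, sumZeroForm, ← mulVec_mulVec, ← mulVec_mulVec, dotProduct_mulVec,
        vecMul_transpose]
    exact form ▸ hpos _ (starIncidence_mulVec_ne_zero hx) (sum_starIncidence_mulVec r x)

lemma posDef_grounded (hA : A.IsSymm) (hrow : A *ᵥ 1 = 0)
    (hpos : ∀ x : V → ℝ, x ≠ 0 → ∑ v, x v = 0 → 0 < x ⬝ᵥ A *ᵥ x) (r : V) :
    (grounded A r).PosDef := by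
  classical
  have hcol : 1 ᵥ* A = 0 := by rw [← mulVec_transpose, hA, hrow]
  refine PosDef.of_dotProduct_mulVec_pos ?_ fun y hy => ?_
  · rw [IsHermitian, conjTranspose_eq_transpose_of_trivial, grounded, transpose_submatrix, hA]
  · obtain ⟨x, sum_x, rfl⟩ := exists_sum_eq_zero_vecMul_starIncidence r y
    have form : star (x ᵥ* starIncidence ℝ r) ⬝ᵥ grounded A r *ᵥ (x ᵥ* starIncidence ℝ r) =
        x ⬝ᵥ A *ᵥ x := by
      conv_rhs => rw [← starIncidence_mul_grounded_mul_transpose r hrow hcol]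
      rw [star_trivial, ← mulVec_mulVec, ← mulVec_mulVec, dotProduct_mulVec x, mulVec_transpose]
    have x_ne_zero : x ≠ 0 := by
      rintro rfl
      exact hy (zero_vecMul _)
    exact form ▸ hpos x x_ne_zero sum_x

end Definite

section Variogram

variable {d : ℕ} {Γ Q S : Matrix (Fin d) (Fin d) ℝ}

lemma trace_weightedLaplacian_mul_eq_sinner (hΓ : Γ.IsSymm) (hΓ0 : ∀ i, Γ i i = 0)
    (hQ : Q.IsSymm) : (weightedLaplacian Q * ((-1 / 2 : ℝ) • Γ)).trace = sinner Γ Q := by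
  have pairs := sum_sum_eq_two_mul_sum_lt (f := fun i j => Γ i j * Q i j)
    (fun i j => by rw [hΓ.apply j i, hQ.apply j i]) fun _ => by rw [hΓ0, zero_mul]
  rw [Matrix.mul_smul, trace_smul, trace_weightedLaplacian_mul Q hΓ0, sinner, smul_eq_mul]
  simp only [hΓ.apply, mul_comm (Q _ _), pairs]
  ring

lemma gammaOf_isSymm (hS : S.IsSymm) : (gammaOf S).IsSymm := by
  ext i j
  simp only [gammaOf, transpose_apply, of_apply, hS.apply i j]
  ring

lemma gammaOf_diag (S : Matrix (Fin d) (Fin d) ℝ) (i : Fin d) : gammaOf S i i = 0 := by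
  simp only [gammaOf, of_apply]
  ring

lemma sumZeroForm_gammaOf (S : Matrix (Fin d) (Fin d) ℝ) (r : Fin d) :
    sumZeroForm ((-1 / 2 : ℝ) • gammaOf S) r = sumZeroForm S r := by
  ext i j
  simp only [sumZeroForm_apply, gammaOf, Matrix.smul_apply, of_apply, smul_eq_mul]
  ring

lemma Pmat_mul_starIncidence (r : Fin d) : Pmat d * starIncidence ℝ r = starIncidence ℝ r := by
  have ones : (of fun _ _ : Fin d => (1 : ℝ)) * starIncidence ℝ r = 0 := by
    ext _ j
    exact congrFun (one_vecMul_starIncidence r) j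
  rw [Pmat, Matrix.sub_mul, Matrix.one_mul, Matrix.smul_mul, ones, smul_zero, sub_zero]

lemma grounded_mul_sumZeroForm_eq_one_iff (hQ : Q.IsSymm) (hS : isSigmaOf Q S)
    (hΓ : Γ.IsSymm) (hΓ0 : ∀ i, Γ i i = 0) (r : Fin d) :
    grounded (weightedLaplacian Q) r * sumZeroForm ((-1 / 2 : ℝ) • Γ) r = 1 ↔ Γ = gammaOf S := by
  have inverse : grounded (weightedLaplacian Q) r * sumZeroForm S r = 1 :=
    grounded_mul_sumZeroForm_eq_one (weightedLaplacian_mulVec_one Q)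
      (one_vecMul_weightedLaplacian hQ)
      (by rw [← thetaOf_eq_weightedLaplacian, hS.2.2, Pmat_mul_starIncidence])
  constructor
  · intro h
    have forms_eq : sumZeroForm ((-1 / 2 : ℝ) • Γ) r =
        sumZeroForm ((-1 / 2 : ℝ) • gammaOf S) r := by
      rw [sumZeroForm_gammaOf]
      exact (right_inv_eq_left_inv inverse (mul_eq_one_comm.mp h)).symm
    have scaled := eq_of_sumZeroForm_eq (hΓ.smul _) ((gammaOf_isSymm hS.1).smul _)
      (fun i => by simp [hΓ0]) (fun i => by simp [gammaOf_diag]) forms_eq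
    exact smul_right_injective _ (by norm_num) scaled
  · rintro rfl
    rw [sumZeroForm_gammaOf, inverse]

lemma surrogateKL_eq_half_steinLoss (hΓ : Γ.IsSymm) (hΓ0 : ∀ i, Γ i i = 0) (hQ : Q.IsSymm)
    {r : Fin d} (hB : (sumZeroForm ((-1 / 2 : ℝ) • Γ) r).PosDef)
    (hL : (grounded (weightedLaplacian Q) r).PosDef) :
    1 / 2 * sinner Γ Q - ((d : ℝ) - 1) / 2 - 1 / 2 * Real.log (CM Γ).det
        - 1 / 2 * Real.log (tau Q) =
      1 / 2 * steinLoss (grounded (weightedLaplacian Q) r * sumZeroForm ((-1 / 2 : ℝ) • Γ) r) := by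
  have card : (Fintype.card {v // v ≠ r} : ℝ) = d - 1 := by
    rw [Fintype.card_subtype_compl, Fintype.card_fin, Fintype.card_subtype_eq,
      Nat.cast_pred r.pos]
  rw [steinLoss, card, det_mul, Real.log_mul hL.det_pos.ne' hB.det_pos.ne',
    trace_grounded_mul_sumZeroForm r (weightedLaplacian_mulVec_one Q)
      (one_vecMul_weightedLaplacian hQ),
    trace_weightedLaplacian_mul_eq_sinner hΓ hΓ0 hQ, det_CM Γ r,
    tau_eq_det_grounded_weightedLaplacian hQ r]
  ring

end Variogram

/-- The surrogate Kullback–Leibler divergence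
`KL(Γ₁, Q₂) = (1/2)⟨Γ₁, Q₂⟩ − (d−1)/2 − (1/2)log det(CM(Γ₁)) − (1/2)log τ(Q₂)`
is nonnegative, with equality if and only if `Γ₁ = Γ(Q₂)`. -/
theorem surrogate_KL_nonneg {d : ℕ} (hd : 0 < d)
    (Γ₁ Q₂ S₂ : Matrix (Fin d) (Fin d) ℝ)
    (h1sym : Γ₁.IsSymm) (h1diag : ∀ i, Γ₁ i i = 0)
    (h1scnd : ∀ x : Fin d → ℝ, x ≠ 0 → (∑ i, x i) = 0 → x ⬝ᵥ Γ₁.mulVec x < 0)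
    (hQ₂ : memQ Q₂) (hS₂ : isSigmaOf Q₂ S₂) :
    0 ≤ (1 / 2) * sinner Γ₁ Q₂ - ((d : ℝ) - 1) / 2
        - (1 / 2) * Real.log ((CM Γ₁).det) - (1 / 2) * Real.log (tau Q₂) ∧
    ((1 / 2) * sinner Γ₁ Q₂ - ((d : ℝ) - 1) / 2
        - (1 / 2) * Real.log ((CM Γ₁).det) - (1 / 2) * Real.log (tau Q₂) = 0 ↔
      Γ₁ = gammaOf S₂) := by
  let r : Fin d := ⟨0, hd⟩
  obtain ⟨hQsym, -, hQpos⟩ := hQ₂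
  have hL : (grounded (weightedLaplacian Q₂) r).PosDef :=
    posDef_grounded (weightedLaplacian_isSymm hQsym) (weightedLaplacian_mulVec_one Q₂)
      (by simpa only [thetaOf_eq_weightedLaplacian] using hQpos) r
  have hB : (sumZeroForm ((-1 / 2 : ℝ) • Γ₁) r).PosDef := by
    refine posDef_sumZeroForm (h1sym.smul _) (fun x hx hsum => ?_) r
    rw [smul_mulVec, dotProduct_smul, smul_eq_mul]
    linarith [h1scnd x hx hsum]
  rw [surrogateKL_eq_half_steinLoss h1sym h1diag hQsym hB hL]
  refine ⟨mul_nonneg (by norm_num) (steinLoss_mul_nonneg hL hB), ?_⟩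
  rw [mul_eq_zero_iff_left (by norm_num), steinLoss_mul_eq_zero_iff hL hB,
    grounded_mul_sumZeroForm_eq_one_iff hQsym hS₂ h1sym h1diag r]
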